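/- Let d ≥ 1 and let X and Y be d×d real matrices, each permutation similar to a unit lower-triangular matrix: there exist permutations σ and τ of {1,…,d} such that X_{σ(i)σ(i)} = 1 for all i and X_{σ(i)σ(j)} = 0 whenever i < j, and likewise Y_{τ(i)τ(i)} = 1 for all i and Y_{τ(i)τ(j)} = 0 whenever i < j. If X Xᵀ = Y Yᵀ, then X = Y. -/

import Mathlib

open Matrix

theorem oicid_stmt_6 (d : ℕ) (hd : 1 ≤ d)
    (X Y : Matrix (Fin d) (Fin d) ℝ)
    (σ τ : Equiv.Perm (Fin d))
    (hXdiag : ∀ i : Fin d, X (σ i) (σ i) = 1)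
    (hXupper : ∀ i j : Fin d, i < j → X (σ i) (σ j) = 0)
    (hYdiag : ∀ i : Fin d, Y (τ i) (τ i) = 1)
    (hYupper : ∀ i j : Fin d, i < j → Y (τ i) (τ j) = 0)
    (h : X * Xᵀ = Y * Yᵀ) :
    X = Y := by
  have hY1 : ∀ a, Y a a = 1 := fun a => by
    simpa using hYdiag (τ.symm a)
  have hS : ∀ a b, ∑ j, X a (σ j) * X b (σ j) = ∑ j, Y a (σ j) * Y b (σ j) := by
    intro a b
    have := congrFun (congrFun h a) b
    simp only [Matrix.mul_apply, Matrix.transpose_apply] at this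
    rw [Equiv.sum_comp σ (fun j => X a j * X b j), Equiv.sum_comp σ (fun j => Y a j * Y b j)]
    exact this
  have key : ∀ n : ℕ, ∀ k : Fin d, k.val = n → ∀ i, X i (σ k) = Y i (σ k) := by
    intro n
    induction n using Nat.strong_induction_on with
    | _ n ih =>
      intro k hk
      have ihk : ∀ l, l < k → ∀ i, X i (σ l) = Y i (σ l) := fun l hl =>
        ih l.val (by rw [← hk]; exact hl) l rfl
      have hrow : ∀ j, X (σ k) (σ j) = Y (σ k) (σ j) := by
        have hnn : ∀ j ∈ Finset.univ, 0 ≤ Y (σ k) (σ j) * Y (σ k) (σ j)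
            - X (σ k) (σ j) * X (σ k) (σ j) := by
          intro j _
          rcases lt_trichotomy j k with hj | hj | hj
          · rw [ihk j hj]; simp
          · subst hj; rw [hXdiag, hY1]; simp
          · rw [hXupper k j hj]; nlinarith [mul_self_nonneg (Y (σ k) (σ j))]
        have hz := (Finset.sum_eq_zero_iff_of_nonneg hnn).1 (by
          rw [Finset.sum_sub_distrib, hS]; simp)
        intro j
        rcases lt_trichotomy j k with hj | hj | hj
        · exact ihk j hj _
        · subst hj; rw [hXdiag, hY1]
        · have := hz j (Finset.mem_univ j)
          rw [hXupper k j hj] at this ⊢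
          have h2 : Y (σ k) (σ j) * Y (σ k) (σ j) = 0 := by linarith
          exact (mul_self_eq_zero.1 h2).symm
      intro i
      have h0 : ∑ j, (X i (σ j) - Y i (σ j)) * X (σ k) (σ j) = 0 := by
        have := hS i (σ k)
        simp only [← hrow] at this
        simp only [sub_mul, Finset.sum_sub_distrib]
        linarith
      rw [Finset.sum_eq_single k] at h0
      · rw [hXdiag] at h0; linarith
      · intro j _ hj
        rcases lt_or_gt_of_ne hj with hj | hj
        · rw [ihk j hj]; simp
        · rw [hXupper k j hj]; simp
      · simp
  ext i j
  simpa using key _ (σ.symm j) rfl i
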